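/- For every α > 0 and L > 0 there exists a function u : ℝ → ℝ such that: u is continuously differentiable on ℝ and twice continuously differentiable on ℝ \ {−L, L}; u is even; u''(x) + u(x)² = α for all x with |x| < L; u''(x) + u(x)² = 0 for all x with |x| > L; u(x) < 0 for all x ∈ ℝ; and u(x) → 0 as x → ±∞. -/

import Mathlib

open Filter

/-!
Inside the forced interval, the solution follows the orbit of `u'' + u² = α` through a turning
point `(-n, 0)` with `0 < n < √α`, on which `u'²/2 + u³/3 - α u` is constant. This orbit meets the
curve `u'² = -(2/3) u³`, the stable manifold of the origin in the unforced plane, at height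
`n³/(3α)` above `-n`. From there the solution `u = -6/(x + c)²` of `u'' + u² = 0` takes over.

It remains to choose `n` so that the transit takes exactly time `L`. The substitution `u = s² - n`
removes the singularity of the transit time integral at the turning point, so that the transit time
is continuous in `n`. It vanishes at `n = 0`, and it tends to infinity as `n → √α`, because the
orbit then spends a long time near the equilibrium `(-√α, 0)`. The intermediate value theorem
concludes.
-/

section

open Set Real Topology

theorem hasDerivAt_ite_le {E : Type*} [NormedAddCommGroup E] [NormedSpace ℝ E] {f g : ℝ → E}
    {d : E} {a x : ℝ} (hf : x ≤ a → HasDerivAt f d x) (hg : a ≤ x → HasDerivAt g d x)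
    (hfg : f a = g a) : HasDerivAt (fun y => if y ≤ a then f y else g y) d x := by
  rcases lt_trichotomy x a with hx | rfl | hx
  · refine (hf hx.le).congr_of_eventuallyEq ?_
    filter_upwards [Iio_mem_nhds hx] with y hy using if_pos (mem_Iio.1 hy).le
  · have hleft : HasDerivWithinAt (fun y => if y ≤ x then f y else g y) d (Iic x) x :=
      (hf le_rfl).hasDerivWithinAt.congr (fun y hy => if_pos hy) (if_pos le_rfl)
    have hright : HasDerivWithinAt (fun y => if y ≤ x then f y else g y) d (Ici x) x := by
      refine (hg le_rfl).hasDerivWithinAt.congr (fun y hy => ?_) (by simp [hfg])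
      rcases (mem_Ici.1 hy).eq_or_lt with rfl | hy
      · simp [hfg]
      · exact if_neg hy.not_ge
    simpa using hleft.union hright
  · refine (hg hx.le).congr_of_eventuallyEq ?_
    filter_upwards [Ioi_mem_nhds hx] with y hy using if_neg (mem_Ioi.1 hy).not_ge

theorem hasDerivAt_ite_le_ite {E : Type*} [NormedAddCommGroup E] [NormedSpace ℝ E]
    {f g f' g' : ℝ → E} {a x : ℝ} (hf : x ≤ a → HasDerivAt f (f' x) x)
    (hg : a ≤ x → HasDerivAt g (g' x) x) (hfg : f a = g a) (hfg' : f' a = g' a) :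
    HasDerivAt (fun y => if y ≤ a then f y else g y) (if x ≤ a then f' x else g' x) x := by
  refine hasDerivAt_ite_le (fun hx => ?_) (fun hx => ?_) hfg
  · simpa only [if_pos hx] using hf hx
  · rcases hx.eq_or_lt with rfl | hax
    · simpa only [le_rfl, if_true, hfg'] using hg le_rfl
    · simpa only [if_neg hax.not_ge] using hg hx

theorem contDiffOn_two_of_hasDerivAt {u u' u'' : ℝ → ℝ} {U : Set ℝ} (hU : IsOpen U)
    (hu : ∀ x ∈ U, HasDerivAt u (u' x) x) (hu' : ∀ x ∈ U, HasDerivAt u' (u'' x) x)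
    (hu'' : ContinuousOn u'' U) : ContDiffOn ℝ 2 u U := by
  rw [← one_add_one_eq_two, contDiffOn_succ_iff_deriv_of_isOpen hU]
  refine ⟨fun x hx => (hu x hx).differentiableAt.differentiableWithinAt, by simp, ?_⟩
  refine ContDiffOn.congr ?_ fun x hx => (hu x hx).deriv
  rw [← zero_add 1, contDiffOn_succ_iff_deriv_of_isOpen hU, contDiffOn_zero]
  exact ⟨fun x hx => (hu' x hx).differentiableAt.differentiableWithinAt, by simp,
    hu''.congr fun x hx => (hu' x hx).deriv⟩

/-- The odd function that agrees with `f` on `(0, ∞)`. The derivative of `x ↦ g |x|` is the odd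
reflection of `g'`. -/
noncomputable def oddReflection (f : ℝ → ℝ) (x : ℝ) : ℝ :=
  if x ≤ 0 then -f (-x) else f x

theorem continuous_oddReflection {f : ℝ → ℝ} (hf : Continuous f) (h0 : f 0 = 0) :
    Continuous (oddReflection f) :=
  Continuous.if_le (by fun_prop) hf continuous_id continuous_const
    fun x hx => by simp [show x = 0 from hx, h0]

theorem hasDerivAt_oddReflection {f : ℝ → ℝ} {d x : ℝ} (hf : HasDerivAt f d |x|)
    (h0 : f 0 = 0) : HasDerivAt (oddReflection f) d x := by
  refine hasDerivAt_ite_le (fun hx => ?_) (fun hx => ?_) (by simp [h0])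
  · rw [abs_of_nonpos hx] at hf
    simpa [Function.comp_def] using (hf.comp x (hasDerivAt_neg x)).fun_neg
  · rwa [abs_of_nonneg hx] at hf

theorem hasDerivAt_comp_abs {f f' : ℝ → ℝ} {x : ℝ} (hf : HasDerivAt f (f' |x|) |x|)
    (h0 : f' 0 = 0) : HasDerivAt (fun y => f |y|) (oddReflection f' x) x := by
  have habs : (fun y => f |y|) = fun y => if y ≤ 0 then f (-y) else f y := by
    funext y
    split_ifs with hy
    · rw [abs_of_nonpos hy]
    · rw [abs_of_pos (not_le.1 hy)]
  rw [habs]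
  refine hasDerivAt_ite_le_ite (f' := fun y => -f' (-y)) (g' := f') (fun hx => ?_)
    (fun hx => ?_) (by simp) (by simp [h0])
  · rw [abs_of_nonpos hx] at hf
    simpa [Function.comp_def] using hf.comp x (hasDerivAt_neg x)
  · rwa [abs_of_nonneg hx] at hf

theorem exists_hasDerivAt_comp_leftInverse_integral_inv {p : ℝ → ℝ} {M : ℝ} (hp : Continuous p)
    (hpos : ∀ y, 0 < p y) (hM : ∀ y, p y ≤ M) :
    ∃ s : ℝ → ℝ, (∀ x, HasDerivAt s (p (s x)) x) ∧
      Function.LeftInverse s fun y => ∫ t in (0 : ℝ)..y, (p t)⁻¹ := by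
  set time : ℝ → ℝ := fun y => ∫ t in (0 : ℝ)..y, (p t)⁻¹
  have htime : ∀ y, HasDerivAt time (p y)⁻¹ y := fun y =>
    ((hp.inv₀ fun t => (hpos t).ne').integral_hasStrictDerivAt 0 y).hasDerivAt
  have hM0 : 0 < M⁻¹ := inv_pos.2 ((hpos 0).trans_le (hM 0))
  have hdiff : Differentiable ℝ time := fun y => (htime y).differentiableAt
  have hgrowth : ∀ ⦃y z⦄, y ≤ z → M⁻¹ * (z - y) ≤ time z - time y :=
    mul_sub_le_image_sub_of_le_deriv hdiff fun y => by
      rw [(htime y).deriv]; exact inv_anti₀ (hpos y) (hM y)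
  have hmono : StrictMono time := strictMono_of_hasDerivAt_pos htime fun y => inv_pos.2 (hpos y)
  have htop : Tendsto time atTop atTop := by
    refine tendsto_atTop_mono' _ ?_ (tendsto_atTop_add_const_left _ (time 0)
      (tendsto_id.const_mul_atTop hM0))
    filter_upwards [eventually_ge_atTop 0] with y hy
    simpa [le_sub_iff_add_le'] using hgrowth hy
  have hbot : Tendsto time atBot atBot := by
    refine tendsto_atBot_mono' _ ?_ (tendsto_atBot_add_const_left _ (time 0)
      (tendsto_id.const_mul_atBot hM0))
    filter_upwards [eventually_le_atBot 0] with y hy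
    have := hgrowth hy
    simp only [id_eq]
    linarith
  let e := hmono.orderIsoOfSurjective time (hdiff.continuous.surjective htop hbot)
  have hinv : ∀ x, time (e.symm x) = x := e.apply_symm_apply
  refine ⟨e.symm, fun x => ?_, e.symm_apply_apply⟩
  simpa using HasDerivAt.of_local_left_inverse e.symm.continuous.continuousAt (htime (e.symm x))
    (inv_pos.2 (hpos _)).ne' (Eventually.of_forall hinv)

theorem integral_inv_sqrt_add_mul_sq {a b : ℝ} (ha : 0 < a) (hb : 0 < b) (r : ℝ) :
    ∫ s in (0 : ℝ)..r, (√(a + b * s ^ 2))⁻¹ = arsinh (√(b / a) * r) / √b := by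
  have hne : ∀ s : ℝ, √(a + b * s ^ 2) ≠ 0 := fun s => by positivity
  have hderiv (s : ℝ) :
      HasDerivAt (fun s => arsinh (√(b / a) * s) / √b) (√(a + b * s ^ 2))⁻¹ s := by
    refine (((hasDerivAt_id s).const_mul (√(b / a))).arsinh.div_const (√b)).congr_deriv ?_
    have hsplit : √(a + b * s ^ 2) = √a * √(1 + (√(b / a) * s) ^ 2) := by
      rw [← sqrt_mul ha.le, mul_pow, sq_sqrt (by positivity)]
      congr 1
      field_simp
    have hratio : √(b / a) * √a = √b := by
      rw [← sqrt_mul (by positivity), div_mul_cancel₀ _ ha.ne']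
    have : √(1 + (√(b / a) * s) ^ 2) ≠ 0 := by positivity
    rw [hsplit, id, smul_eq_mul]
    field_simp
    linear_combination hratio
  rw [intervalIntegral.integral_eq_sub_of_hasDerivAt (fun s _ => hderiv s)
    (Continuous.intervalIntegrable (by fun_prop (disch := exact hne _)) _ _)]
  simp

theorem tendsto_arsinh_atTop : Tendsto arsinh atTop atTop :=
  sinhOrderIso.symm.tendsto_atTop

/-- The height `R` above `-n` at which the orbit of the forced plane through `(-n, 0)` meets the
stable manifold `3 u' ^ 2 + 2 u ^ 3 = 0` of the unforced plane. -/
noncomputable def exitHeight (α n : ℝ) : ℝ := n ^ 3 / (3 * α)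

/-- The quotient `u' ^ 2 / (4 y)` as a function of the height `y = u + n`, along the orbit of the
forced plane through `(-n, 0)`. -/
noncomputable def reducedSpeedSq (α n y : ℝ) : ℝ := (α - n ^ 2 + n * y - y ^ 2 / 3) / 2

/-- The speed of `s` along the orbit of the forced plane through `(-n, 0)`, where `u = s ^ 2 - n`.
It is frozen beyond the exit height, so that it is positive and bounded on all of `ℝ`. -/
noncomputable def speed (α n s : ℝ) : ℝ := √(reducedSpeedSq α n (min (s ^ 2) (exitHeight α n)))

/-- The time the orbit of the forced plane through `(-n, 0)` takes to reach the stable manifold of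
the unforced plane. -/
noncomputable def transitTime (α n : ℝ) : ℝ := ∫ s in (0 : ℝ)..√(exitHeight α n), (speed α n s)⁻¹

section Orbit

variable {α n : ℝ}

theorem exitHeight_nonneg (hα : 0 ≤ α) (hn : 0 ≤ n) : 0 ≤ exitHeight α n := by
  unfold exitHeight
  positivity

theorem exitHeight_pos (hα : 0 < α) (hn : 0 < n) : 0 < exitHeight α n := by
  unfold exitHeight
  positivity

theorem exitHeight_lt (hn : 0 < n) (hnα : n ^ 2 < α) : exitHeight α n < n := by
  have : 0 < α := (sq_nonneg n).trans_lt hnα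
  rw [exitHeight, div_lt_iff₀ (by positivity)]
  calc n ^ 3 = n * n ^ 2 := by ring
    _ < n * (3 * α) := by gcongr; linarith

theorem exitHeight_le (hn : 0 ≤ n) (hnα : n ^ 2 < α) : exitHeight α n ≤ n := by
  rcases hn.eq_or_lt with rfl | hn
  · simp [exitHeight]
  · exact (exitHeight_lt hn hnα).le

theorem reducedSpeedSq_pos {y : ℝ} (hnα : n ^ 2 < α) (hy : y ∈ Icc 0 n) :
    0 < reducedSpeedSq α n y := by
  have : y ^ 2 ≤ n * y := by nlinarith [hy.1, hy.2]
  unfold reducedSpeedSq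
  nlinarith [sq_nonneg y]

theorem reducedSpeedSq_le {y : ℝ} (hy : y ∈ Icc 0 n) : reducedSpeedSq α n y ≤ α / 2 := by
  have : n * y ≤ n ^ 2 := by nlinarith [hy.1, hy.2]
  unfold reducedSpeedSq
  nlinarith [sq_nonneg y]

theorem min_sq_exitHeight_mem_Icc (hn : 0 ≤ n) (hnα : n ^ 2 < α) (s : ℝ) :
    min (s ^ 2) (exitHeight α n) ∈ Icc 0 n :=
  ⟨le_min (sq_nonneg s) (exitHeight_nonneg ((sq_nonneg n).trans hnα.le) hn),
    min_le_of_right_le (exitHeight_le hn hnα)⟩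

theorem speed_pos (hn : 0 ≤ n) (hnα : n ^ 2 < α) (s : ℝ) : 0 < speed α n s :=
  sqrt_pos.2 (reducedSpeedSq_pos hnα (min_sq_exitHeight_mem_Icc hn hnα s))

theorem speed_le (hn : 0 ≤ n) (hnα : n ^ 2 < α) (s : ℝ) : speed α n s ≤ √(α / 2) :=
  sqrt_le_sqrt (reducedSpeedSq_le (min_sq_exitHeight_mem_Icc hn hnα s))

theorem continuous_speed_uncurry (α : ℝ) : Continuous fun q : ℝ × ℝ => speed α q.1 q.2 := by
  unfold speed reducedSpeedSq exitHeight
  fun_prop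

theorem speed_of_sq_le {s : ℝ} (hs : s ^ 2 ≤ exitHeight α n) :
    speed α n s = √(reducedSpeedSq α n (s ^ 2)) := by
  rw [speed, min_eq_left hs]

theorem speed_le_sqrt_add_mul_sq (hn : 0 ≤ n) (s : ℝ) :
    speed α n s ≤ √((α - n ^ 2) / 2 + n / 2 * s ^ 2) := by
  refine sqrt_le_sqrt ?_
  have : n * min (s ^ 2) (exitHeight α n) ≤ n * s ^ 2 := by gcongr; exact min_le_left _ _
  unfold reducedSpeedSq
  linarith [sq_nonneg (min (s ^ 2) (exitHeight α n))]

theorem continuousOn_transitTime (α : ℝ) : ContinuousOn (transitTime α) (Ico 0 √α) := by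
  rw [continuousOn_iff_continuous_domRestrict]
  refine intervalIntegral.continuous_parametric_intervalIntegral_of_continuous
    (f := fun (n : Ico 0 √α) s => (speed α n s)⁻¹) ?_ ?_
  · refine Continuous.inv₀ ((continuous_speed_uncurry α).comp
      (f := fun q : Ico 0 √α × ℝ => ((q.1 : ℝ), q.2)) (by fun_prop)) ?_
    rintro ⟨⟨n, hn0, hn⟩, s⟩
    exact (speed_pos hn0 ((lt_sqrt hn0).1 hn) s).ne'
  · unfold exitHeight
    fun_prop

theorem arsinh_le_transitTime (hn : 0 < n) (hnα : n ^ 2 < α) :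
    arsinh √(n * exitHeight α n / (α - n ^ 2)) / √(n / 2) ≤ transitTime α n := by
  have hgap : 0 < (α - n ^ 2) / 2 := by linarith
  have hexact : arsinh √(n * exitHeight α n / (α - n ^ 2)) / √(n / 2) =
      ∫ s in (0 : ℝ)..√(exitHeight α n), (√((α - n ^ 2) / 2 + n / 2 * s ^ 2))⁻¹ := by
    rw [integral_inv_sqrt_add_mul_sq hgap (half_pos hn), ← sqrt_mul (by positivity),
      div_div_div_cancel_right₀ two_ne_zero, div_mul_eq_mul_div]
  rw [hexact]
  refine intervalIntegral.integral_mono_on (sqrt_nonneg _) ?_ ?_ fun s _ =>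
    inv_anti₀ (speed_pos hn.le hnα s) (speed_le_sqrt_add_mul_sq hn.le s)
  · refine Continuous.intervalIntegrable (Continuous.inv₀ (by fun_prop) fun s => ?_) _ _
    positivity
  · exact (((continuous_speed_uncurry α).comp (Continuous.prodMk_right n)).inv₀
      fun s => (speed_pos hn.le hnα s).ne').intervalIntegrable _ _

theorem tendsto_transitTime (hα : 0 < α) : Tendsto (transitTime α) (𝓝[<] √α) atTop := by
  have hpos : 0 < √α := sqrt_pos.2 hα
  have hrange : ∀ᶠ n in 𝓝[<] √α, n ∈ Ioo 0 √α := Ioo_mem_nhdsLT hpos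
  have hgap : Tendsto (fun n => α - n ^ 2) (𝓝[<] √α) (𝓝[>] 0) := by
    refine tendsto_nhdsWithin_iff.2 ⟨?_, ?_⟩
    · have : ContinuousAt (fun n => α - n ^ 2) √α := by fun_prop
      simpa [ContinuousAt, sq_sqrt hα.le] using this.continuousWithinAt.tendsto
    · filter_upwards [hrange] with n hn using sub_pos.2 ((lt_sqrt hn.1.le).1 hn.2)
  have hheight : Tendsto (fun n => n * exitHeight α n) (𝓝[<] √α) (𝓝 (√α * exitHeight α √α)) := by
    have : ContinuousAt (fun n => n * exitHeight α n) √α := by unfold exitHeight; fun_prop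
    exact this.continuousWithinAt
  have hheight_pos : 0 < √α * exitHeight α √α := mul_pos hpos (exitHeight_pos hα hpos)
  have hrate : Tendsto (fun n => (√(n / 2))⁻¹) (𝓝[<] √α) (𝓝 (√(√α / 2))⁻¹) := by
    have : ContinuousAt (fun n => (√(n / 2))⁻¹) √α :=
      ContinuousAt.inv₀ (by fun_prop) (by positivity)
    exact this.continuousWithinAt
  have harsinh : Tendsto (fun n => arsinh √(n * exitHeight α n / (α - n ^ 2))) (𝓝[<] √α) atTop :=
    tendsto_arsinh_atTop.comp <| tendsto_sqrt_atTop.comp <|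
      hheight.pos_mul_atTop hheight_pos (tendsto_inv_nhdsGT_zero.comp hgap)
  refine tendsto_atTop_mono' _ ?_ (harsinh.atTop_mul_pos (by positivity) hrate)
  filter_upwards [hrange] with n hn
  exact arsinh_le_transitTime hn.1 ((lt_sqrt hn.1.le).1 hn.2)

theorem exists_transitTime_eq {L : ℝ} (hα : 0 < α) (hL : 0 < L) :
    ∃ n, 0 < n ∧ n ^ 2 < α ∧ transitTime α n = L := by
  have hzero : transitTime α 0 = 0 := by simp [transitTime, exitHeight]
  have hpos : 0 < √α := sqrt_pos.2 hα
  obtain ⟨n, hn, hnL⟩ := isPreconnected_Ico.intermediate_value_Ici (left_mem_Ico.2 hpos)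
    (le_principal_iff.2 (Ico_mem_nhdsLT hpos)) (continuousOn_transitTime α)
    (tendsto_transitTime hα) (hzero.trans_le hL.le)
  have hn0 : n ≠ 0 := by rintro rfl; exact hL.ne (hzero.symm.trans hnL)
  exact ⟨n, hn.1.lt_of_ne' hn0, (lt_sqrt hn.1).1 hn.2, hnL⟩

theorem hasDerivAt_speed {s : ℝ} (hn : 0 ≤ n) (hnα : n ^ 2 < α) (hs : s ^ 2 < exitHeight α n) :
    HasDerivAt (speed α n) (s * (n - 2 * s ^ 2 / 3) / (2 * speed α n s)) s := by
  have hsq : HasDerivAt (fun t => reducedSpeedSq α n (t ^ 2)) (s * (n - 2 * s ^ 2 / 3)) s := by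
    have hpow (k : ℕ) := hasDerivAt_pow k s
    refine (((((hpow 2).const_mul n).const_add (α - n ^ 2)).sub
      ((hpow 4).div_const 3)).div_const 2).congr_of_eventuallyEq (.of_forall fun t => ?_)
      |>.congr_deriv (by ring)
    simp only [reducedSpeedSq, Pi.sub_apply]
    ring
  have hpos : 0 < reducedSpeedSq α n (s ^ 2) :=
    reducedSpeedSq_pos hnα ⟨sq_nonneg s, hs.le.trans (exitHeight_le hn hnα)⟩
  rw [speed_of_sq_le hs.le]
  refine (hsq.sqrt hpos.ne').congr_of_eventuallyEq ?_
  have hnear : ∀ᶠ t in 𝓝 s, t ^ 2 < exitHeight α n :=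
    (continuous_pow 2).continuousAt.eventually_lt_const hs
  filter_upwards [hnear] with t ht using speed_of_sq_le ht.le

theorem sq_speed {s : ℝ} (hn : 0 ≤ n) (hnα : n ^ 2 < α) (hs : s ^ 2 ≤ exitHeight α n) :
    speed α n s ^ 2 = reducedSpeedSq α n (s ^ 2) := by
  rw [speed_of_sq_le hs, sq_sqrt
    (reducedSpeedSq_pos hnα ⟨sq_nonneg s, hs.trans (exitHeight_le hn hnα)⟩).le]

theorem hasDerivAt_two_mul_mul_speed {s : ℝ → ℝ} {x : ℝ} (hn : 0 ≤ n) (hnα : n ^ 2 < α)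
    (hs : HasDerivAt s (speed α n (s x)) x) (hsx : s x ^ 2 < exitHeight α n) :
    HasDerivAt (fun y => 2 * s y * speed α n (s y)) (α - (s x ^ 2 - n) ^ 2) x := by
  have hspeed : HasDerivAt (fun y => speed α n (s y)) (s x * (n - 2 * s x ^ 2 / 3) / 2) x := by
    refine ((hasDerivAt_speed hn hnα hsx).comp x hs).congr_deriv ?_
    have := (speed_pos hn hnα (s x)).ne'
    field_simp
  refine ((hs.const_mul 2).fun_mul hspeed).congr_deriv ?_
  have hsq := sq_speed hn hnα hsx.le
  unfold reducedSpeedSq at hsq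
  linear_combination 2 * hsq

theorem sq_velocity_exit (hn : 0 ≤ n) (hnα : n ^ 2 < α) :
    (2 * √(exitHeight α n) * speed α n √(exitHeight α n)) ^ 2 =
      -(2 / 3) * (exitHeight α n - n) ^ 3 := by
  have hα : 0 < α := (sq_nonneg n).trans_lt hnα
  have hsqrt : √(exitHeight α n) ^ 2 = exitHeight α n := sq_sqrt (exitHeight_nonneg hα.le hn)
  have hexit : 3 * α * exitHeight α n = n ^ 3 := by unfold exitHeight; field_simp
  rw [mul_pow, mul_pow, sq_speed hn hnα hsqrt.le, hsqrt, reducedSpeedSq]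
  linear_combination (2 / 3) * hexit

end Orbit

/-- The last equation places the endpoint `(v L, w L)` on the stable manifold of the origin in the
unforced plane. -/
theorem exists_innerArc {α L : ℝ} (hα : 0 < α) (hL : 0 < L) :
    ∃ v w : ℝ → ℝ, (∀ x, HasDerivAt v (w x) x) ∧ Continuous w ∧ w 0 = 0 ∧
      (∀ x, 0 ≤ x → x < L → HasDerivAt w (α - v x ^ 2) x) ∧
      (∀ x, 0 ≤ x → x ≤ L → v x < 0) ∧ 0 < w L ∧ w L ^ 2 = -(2 / 3) * v L ^ 3 := by
  obtain ⟨n, hn, hnα, hnL⟩ := exists_transitTime_eq hα hL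
  have hcont : Continuous (speed α n) :=
    (continuous_speed_uncurry α).comp (Continuous.prodMk_right n)
  obtain ⟨s, hs, hs_time⟩ :=
    exists_hasDerivAt_comp_leftInverse_integral_inv hcont (speed_pos hn.le hnα)
      (speed_le hn.le hnα)
  have hs0 : s 0 = 0 := by simpa using hs_time 0
  have hsL : s L = √(exitHeight α n) := hnL ▸ hs_time _
  have hmono : StrictMono s := strictMono_of_hasDerivAt_pos hs fun x => speed_pos hn.le hnα _
  have hs_nonneg {x : ℝ} (hx : 0 ≤ x) : 0 ≤ s x := hs0 ▸ hmono.monotone hx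
  have hR : 0 < exitHeight α n := exitHeight_pos hα hn
  have hs_cont : Continuous s := continuous_iff_continuousAt.2 fun x => (hs x).continuousAt
  refine ⟨fun x => s x ^ 2 - n, fun x => 2 * s x * speed α n (s x), fun x => ?_,
    by fun_prop, by simp [hs0], fun x hx hxL => ?_, fun x hx hxL => ?_, ?_, ?_⟩
  · simpa using ((hs x).pow 2).sub_const n
  · exact hasDerivAt_two_mul_mul_speed hn.le hnα (hs x)
      ((lt_sqrt (hs_nonneg hx)).1 (hsL ▸ hmono hxL))
  · have : s x ^ 2 ≤ exitHeight α n :=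
      (le_sqrt (hs_nonneg hx) hR.le).1 (hsL ▸ hmono.monotone hxL)
    linarith [exitHeight_lt hn hnα]
  · have := speed_pos hn.le hnα (s L)
    have : 0 < s L := hsL ▸ sqrt_pos.2 hR
    positivity
  · simpa only [hsL, sq_sqrt hR.le] using sq_velocity_exit hn.le hnα

theorem hasDerivAt_neg_six_div_add_sq {c x : ℝ} (hx : x + c ≠ 0) :
    HasDerivAt (fun y => -6 / (y + c) ^ 2) (12 / (x + c) ^ 3) x := by
  refine ((((hasDerivAt_id x).add_const c).fun_pow 2).fun_inv (pow_ne_zero 2 hx)).const_mul (-6)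
    |>.congr_deriv ?_
  simp only [id_eq]
  field_simp
  ring

theorem hasDerivAt_twelve_div_add_cube {c x : ℝ} (hx : x + c ≠ 0) :
    HasDerivAt (fun y => 12 / (y + c) ^ 3) (-(-6 / (x + c) ^ 2) ^ 2) x := by
  refine ((((hasDerivAt_id x).add_const c).fun_pow 3).fun_inv (pow_ne_zero 3 hx)).const_mul 12
    |>.congr_deriv ?_
  simp only [id_eq]
  field_simp
  ring

theorem exists_eq_neg_six_div_sq_and_eq_twelve_div_cube {a b : ℝ} (ha : a < 0)
    (hb : 0 < b) (hab : b ^ 2 = -(2 / 3) * a ^ 3) :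
    ∃ d, 0 < d ∧ a = -6 / d ^ 2 ∧ b = 12 / d ^ 3 := by
  have hane : a ≠ 0 := ha.ne
  refine ⟨-2 * a / b, div_pos (by linarith) hb, ?_, ?_⟩
  · field_simp
    linear_combination 6 * hab
  · field_simp
    linear_combination 12 * hab

/-- `g` is the restriction to `[0, ∞)` of an even negative solution of `u'' + u ^ 2 = α f` decaying
at infinity, `f` being the top-hat of half-width `L`, and `g'` is its derivative. The values of `g`
on `(-∞, 0)` are immaterial. -/
structure IsHalfLineSolution (α L : ℝ) (g g' : ℝ → ℝ) : Prop where
  hasDerivAt (x : ℝ) : HasDerivAt g (g' x) x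
  continuous_deriv : Continuous g'
  deriv_zero : g' 0 = 0
  hasDerivAt_deriv_of_lt (x : ℝ) : 0 ≤ x → x < L → HasDerivAt g' (α - g x ^ 2) x
  hasDerivAt_deriv_of_gt (x : ℝ) : L < x → HasDerivAt g' (-g x ^ 2) x
  neg (x : ℝ) : 0 ≤ x → g x < 0
  tendsto : Tendsto g atTop (𝓝 0)

theorem exists_isHalfLineSolution {α L : ℝ} (hα : 0 < α) (hL : 0 < L) :
    ∃ g g', IsHalfLineSolution α L g g' := by
  obtain ⟨v, w, hv, hw, hw0, hvw, hneg, hwL, hexit⟩ := exists_innerArc hα hL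
  obtain ⟨d, hd, hvd, hwd⟩ :=
    exists_eq_neg_six_div_sq_and_eq_twelve_div_cube (hneg L hL.le le_rfl) hwL hexit
  have hbase {x : ℝ} (hx : L ≤ x) : 0 < x + (d - L) := by linarith
  set o : ℝ → ℝ := fun x => -6 / (x + (d - L)) ^ 2
  set o' : ℝ → ℝ := fun x => 12 / (x + (d - L)) ^ 3
  have ho {x : ℝ} (hx : L ≤ x) : HasDerivAt o (o' x) x :=
    hasDerivAt_neg_six_div_add_sq (hbase hx).ne'
  have ho' {x : ℝ} (hx : L ≤ x) : HasDerivAt o' (-o x ^ 2) x :=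
    hasDerivAt_twelve_div_add_cube (hbase hx).ne'
  have hvo : v L = o L := by simpa [o] using hvd
  have hwo : w L = o' L := by simpa [o'] using hwd
  refine ⟨fun x => if x ≤ L then v x else o x, fun x => if x ≤ L then w x else o' x,
    fun x => hasDerivAt_ite_le_ite (fun _ => hv x) ho hvo hwo, ?_, by simp [hL.le, hw0],
    fun x hx hxL => ?_, fun x hxL => ?_, fun x hx => ?_, ?_⟩
  · exact continuous_if_le continuous_id continuous_const hw.continuousOn
      (fun x hx => (ho' hx).continuousAt.continuousWithinAt) fun x hx => by
        rw [show x = L from hx, hwo]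
  · refine hasDerivAt_ite_le (fun _ => ?_) (fun hx => absurd hx hxL.not_ge) hwo
    simpa [hxL.le] using hvw x hx hxL
  · refine hasDerivAt_ite_le (fun hx => absurd hx hxL.not_ge) (fun _ => ?_) hwo
    simpa [hxL.not_ge] using ho' hxL.le
  · split_ifs with hxL
    · exact hneg x hx hxL
    · have := hbase (not_le.1 hxL).le
      exact div_neg_of_neg_of_pos (by norm_num) (by positivity)
  · have hdecay : Tendsto o atTop (𝓝 0) := ((tendsto_pow_atTop two_ne_zero).comp
      (tendsto_atTop_add_const_right _ (d - L) tendsto_id)).const_div_atTop (-6)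
    refine hdecay.congr' ?_
    filter_upwards [eventually_gt_atTop L] with x hx using (if_neg hx.not_ge).symm

/-- The forcing `α f` for the top-hat `f = H (· + L) - H (· - L)`. The values at `±L` are
immaterial. -/
noncomputable def topHat (α L x : ℝ) : ℝ := if |x| < L then α else 0

theorem abs_ne_of_mem_compl_pair {L x : ℝ} (hx : x ∈ ({-L, L} : Set ℝ)ᶜ) : |x| ≠ L := by
  rintro rfl
  rcases abs_choice x with h | h <;> simp [h] at hx

theorem continuousOn_topHat (α L : ℝ) : ContinuousOn (topHat α L) {-L, L}ᶜ := by
  refine ContinuousOn.if (fun x hx => ?_) continuousOn_const continuousOn_const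
  exact absurd (frontier_lt_subset_eq continuous_abs continuous_const hx.2)
    (abs_ne_of_mem_compl_pair hx.1)

namespace IsHalfLineSolution

variable {α L : ℝ} {g g' : ℝ → ℝ}

theorem hasDerivAt_even (h : IsHalfLineSolution α L g g') (x : ℝ) :
    HasDerivAt (fun y => g |y|) (oddReflection g' x) x :=
  hasDerivAt_comp_abs (h.hasDerivAt |x|) h.deriv_zero

theorem deriv_even (h : IsHalfLineSolution α L g g') :
    deriv (fun y => g |y|) = oddReflection g' :=
  funext fun x => (h.hasDerivAt_even x).deriv

theorem hasDerivAt_deriv_even (h : IsHalfLineSolution α L g g') {x : ℝ} (hx : |x| ≠ L) :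
    HasDerivAt (deriv fun y => g |y|) (topHat α L x - g |x| ^ 2) x := by
  rw [h.deriv_even]
  refine hasDerivAt_oddReflection ?_ h.deriv_zero
  rcases hx.lt_or_gt with hx | hx
  · simpa [topHat, hx] using h.hasDerivAt_deriv_of_lt |x| (abs_nonneg x) hx
  · simpa [topHat, hx.not_gt] using h.hasDerivAt_deriv_of_gt |x| hx

theorem continuous_deriv_even (h : IsHalfLineSolution α L g g') :
    Continuous (deriv fun y => g |y|) := by
  rw [h.deriv_even]
  exact continuous_oddReflection h.continuous_deriv h.deriv_zero

theorem contDiffOn_even (h : IsHalfLineSolution α L g g') :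
    ContDiffOn ℝ 2 (fun y => g |y|) {-L, L}ᶜ := by
  have hcont : Continuous fun y => g |y| :=
    continuous_iff_continuousAt.2 fun x => (h.hasDerivAt_even x).continuousAt
  exact contDiffOn_two_of_hasDerivAt (toFinite {-L, L}).isClosed.isOpen_compl
    (fun x _ => (h.hasDerivAt_even x).differentiableAt.hasDerivAt)
    (fun x hx => h.hasDerivAt_deriv_even (abs_ne_of_mem_compl_pair hx))
    ((continuousOn_topHat α L).sub (hcont.pow 2).continuousOn)

theorem deriv_deriv_even_add_sq (h : IsHalfLineSolution α L g g') {x : ℝ} (hx : |x| ≠ L) :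
    deriv (deriv fun y => g |y|) x + g |x| ^ 2 = topHat α L x := by
  rw [(h.hasDerivAt_deriv_even hx).deriv, sub_add_cancel]

end IsHalfLineSolution

end

/-- Existence of the negative-definite branch `B₀` for the top-hat forcing of height `α`
and half-width `L`: for any `α > 0`, `L > 0` there is an even, everywhere negative,
continuously differentiable function, twice continuously differentiable away from `±L`,
solving `u'' + u² = α` for `|x| < L`, `u'' + u² = 0` for `|x| > L`, and decaying at
`±∞`. -/
theorem statement19 (α L : ℝ) (hα : 0 < α) (hL : 0 < L) :
    ∃ u : ℝ → ℝ,
      Differentiable ℝ u ∧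
      Continuous (deriv u) ∧
      ContDiffOn ℝ 2 u (({-L, L} : Set ℝ)ᶜ) ∧
      (∀ x : ℝ, u (-x) = u x) ∧
      (∀ x : ℝ, |x| < L → deriv (deriv u) x + (u x) ^ 2 = α) ∧
      (∀ x : ℝ, L < |x| → deriv (deriv u) x + (u x) ^ 2 = 0) ∧
      (∀ x : ℝ, u x < 0) ∧
      Tendsto u atTop (nhds 0) ∧ Tendsto u atBot (nhds 0) := by
  obtain ⟨g, g', hg⟩ := exists_isHalfLineSolution hα hL
  exact ⟨fun x => g |x|, fun x => (hg.hasDerivAt_even x).differentiableAt,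
    hg.continuous_deriv_even, hg.contDiffOn_even, fun x => by simp only [abs_neg],
    fun x hx => (hg.deriv_deriv_even_add_sq hx.ne).trans (if_pos hx),
    fun x hx => (hg.deriv_deriv_even_add_sq hx.ne').trans (if_neg hx.not_gt),
    fun x => hg.neg |x| (abs_nonneg x), hg.tendsto.comp tendsto_abs_atTop_atTop,
    hg.tendsto.comp tendsto_abs_atBot_atTop⟩
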